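/- Consider the naive seller-side experiment with feedback loops under a fixed partition {1,…,N} = 𝒯 ⊔ 𝒞, with ê_i^C(t) = ê_i^T(t) for all i and t, with a common pacing function Ψ^T = Ψ^C = Ψ, and under Assumptions 1–3 (monotonicity of f_i and Ψ, nonnegative outcomes, uniform treatment effect e_i^T(t) ≥ e_i^C(t) ≥ 0, continuity, and finitely many zero-crossing times of the threshold functions). Suppose the experiment dynamics, the global treatment dynamics, and the global control dynamics each admit solutions with common initial states S_i^{E}(0) = S_i^{GT}(0) = S_i^{GC}(0). Then for every seller i = 1,…,N and every t ∈ [0,H], ∫₀^t O_i^{E}(s) ds ≤ ∫₀^t O_i^{GT}(s) ds. -/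

import Mathlib

theorem aux_sum_le {N : ℕ} (f : Fin N → (Fin N → ℝ) → ℝ → ℝ)
    (hf_anti : ∀ (i j : Fin N), j ≠ i → ∀ (r : Fin N → ℝ) (R₀ x y : ℝ), x ≤ y →
      f i (Function.update r j y) R₀ ≤ f i (Function.update r j x) R₀)
    (hf_sum_mono : ∀ (I : Finset (Fin N)) (i : Fin N), i ∈ I →
      ∀ (r : Fin N → ℝ) (R₀ x y : ℝ), x ≤ y →
      ∑ j ∈ I, f j (Function.update r i x) R₀ ≤ ∑ j ∈ I, f j (Function.update r i y) R₀)
    (A : Finset (Fin N)) (r r' : Fin N → ℝ) (R₀ : ℝ)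
    (h1 : ∀ j ∈ A, r j ≤ r' j) (h2 : ∀ j, j ∉ A → r' j ≤ r j) :
    ∑ j ∈ A, f j r R₀ ≤ ∑ j ∈ A, f j r' R₀ := by
  have key : ∀ B : Finset (Fin N),
      ∑ j ∈ A, f j r R₀ ≤ ∑ j ∈ A, f j (B.piecewise r' r) R₀ := by
    intro B
    induction B using Finset.induction_on with
    | empty => simp
    | insert j B hj ih =>
      refine ih.trans ?_
      rw [Finset.piecewise_insert]
      have hg : B.piecewise r' r = Function.update (B.piecewise r' r) j (r j) := by
        rw [eq_comm, Function.update_eq_self_iff, Finset.piecewise_eq_of_notMem _ _ _ hj]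
      by_cases hA : j ∈ A
      · have := hf_sum_mono A j hA (B.piecewise r' r) R₀ _ _ (h1 j hA)
        rwa [← hg] at this
      · refine Finset.sum_le_sum fun i hi => ?_
        have := hf_anti i j (fun h => hA (h ▸ hi)) (B.piecewise r' r) R₀ _ _ (h2 j hA)
        rwa [← hg] at this
  simpa using key Finset.univ

theorem aux_sign (g : ℝ → ℝ) (x y : ℝ) (hg : ContinuousOn g (Set.Ioo x y))
    (h0 : ∀ t ∈ Set.Ioo x y, g t ≠ 0) :
    (∀ t ∈ Set.Ioo x y, 0 < g t) ∨ (∀ t ∈ Set.Ioo x y, g t < 0) := by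
  by_contra hc
  push Not at hc
  obtain ⟨⟨a, ha, ha'⟩, b, hb, hb'⟩ := hc
  obtain ⟨c, hc, hc'⟩ := isPreconnected_Ioo.intermediate_value ha hb hg ⟨ha', hb'⟩
  exact h0 c hc hc'


/-- key pathwise claim in the proof of Theorem 1: naive
seller-side experiment with feedback loops under a fixed partition `𝒯 = T`,
`𝒞 = Tᶜ`, with `ê_i^C = ê_i^T`, common pacing function `Ψ`, Assumptions 1–3,
and solutions of the experiment / global-treatment / global-control dynamics
with common initial states. Then the cumulative experimental outcome of each
seller is bounded above by its global-treatment counterpart. -/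
theorem stmt6 (N : ℕ) (H : ℝ) (hH : 0 < H)
    (eT eC ehT ehC : Fin N → ℝ → ℝ) (R : ℝ → ℝ)
    (f : Fin N → (Fin N → ℝ) → ℝ → ℝ) (Ψ : ℝ → ℝ → ℝ)
    (T : Finset (Fin N))
    (heq : ∀ (i : Fin N) (t : ℝ), t ∈ Set.Icc (0 : ℝ) H → ehC i t = ehT i t)
    -- Assumption 1.(1): f_i non-increasing in r_j (j ≠ i), and the sum over any
    -- index set containing i is non-decreasing in r_i
    (hf_anti : ∀ (i j : Fin N), j ≠ i → ∀ (r : Fin N → ℝ) (R₀ x y : ℝ), x ≤ y →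
      f i (Function.update r j y) R₀ ≤ f i (Function.update r j x) R₀)
    (hf_sum_mono : ∀ (I : Finset (Fin N)) (i : Fin N), i ∈ I →
      ∀ (r : Fin N → ℝ) (R₀ x y : ℝ), x ≤ y →
      ∑ j ∈ I, f j (Function.update r i x) R₀ ≤ ∑ j ∈ I, f j (Function.update r i y) R₀)
    -- Assumption 1.(2): Ψ non-increasing in the state
    (hΨ_anti : ∀ e : ℝ, ∀ s s' : ℝ, s ≤ s' → Ψ s' e ≤ Ψ s e)
    -- Assumption 1.(4): Ψ non-decreasing in the estimated score
    (hΨ_mono : ∀ s : ℝ, ∀ e e' : ℝ, e ≤ e' → Ψ s e ≤ Ψ s e')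
    -- Assumption 2: nonnegative outcomes, uniform treatment effect
    (he_nonneg : ∀ (i : Fin N) (t : ℝ), t ∈ Set.Icc (0 : ℝ) H → 0 ≤ eC i t)
    (he_mono : ∀ (i : Fin N) (t : ℝ), t ∈ Set.Icc (0 : ℝ) H → eC i t ≤ eT i t)
    -- processes
    (SE rE fNE IE OE : Fin N → ℝ → ℝ)
    (SGT rGT fGT IGT OGT : Fin N → ℝ → ℝ)
    (SGC rGC fGC IGC OGC : Fin N → ℝ → ℝ)
    -- Assumption 3: continuity and finitely many zero-crossing times
    (hcont_e : ∀ i : Fin N, ContinuousOn (eT i) (Set.Icc 0 H) ∧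
      ContinuousOn (eC i) (Set.Icc 0 H) ∧ ContinuousOn (ehT i) (Set.Icc 0 H) ∧
      ContinuousOn (ehC i) (Set.Icc 0 H))
    (hcont_R : Continuous R)
    (hcont_f : ∀ i : Fin N, Continuous (fun x : (Fin N → ℝ) × ℝ => f i x.1 x.2))
    (hcont_Ψ : Continuous (fun x : ℝ × ℝ => Ψ x.1 x.2))
    (hfin : Set.Finite {t : ℝ | t ∈ Set.Icc (0 : ℝ) H ∧
      ∃ i : Fin N, fNE i t = 0 ∨ fGT i t = 0 ∨ fGC i t = 0})
    -- common initial states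
    (hS0 : ∀ i : Fin N, SE i 0 = SGT i 0 ∧ SE i 0 = SGC i 0)
    -- naive experiment dynamics
    (hrE : ∀ (i : Fin N) (t : ℝ), t ∈ Set.Icc (0 : ℝ) H →
      rE i t = Ψ (SE i t) (if i ∈ T then ehT i t else ehC i t))
    (hfNE : ∀ (i : Fin N) (t : ℝ), t ∈ Set.Icc (0 : ℝ) H →
      fNE i t = f i (fun j => rE j t) (R t))
    (hIE : ∀ (i : Fin N) (t : ℝ), t ∈ Set.Icc (0 : ℝ) H →
      IE i t = if 0 ≤ fNE i t then 1 else 0)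
    (hOE : ∀ (i : Fin N) (t : ℝ), t ∈ Set.Icc (0 : ℝ) H →
      OE i t = IE i t * (if i ∈ T then eT i t else eC i t))
    (hOE_int : ∀ i : Fin N, IntervalIntegrable (OE i) MeasureTheory.volume 0 H)
    (hSE : ∀ (i : Fin N) (t : ℝ), t ∈ Set.Icc (0 : ℝ) H →
      SE i t = SE i 0 + ∫ s in (0:ℝ)..t, OE i s)
    -- global treatment dynamics
    (hrGT : ∀ (i : Fin N) (t : ℝ), t ∈ Set.Icc (0 : ℝ) H →
      rGT i t = Ψ (SGT i t) (ehT i t))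
    (hfGT : ∀ (i : Fin N) (t : ℝ), t ∈ Set.Icc (0 : ℝ) H →
      fGT i t = f i (fun j => rGT j t) (R t))
    (hIGT : ∀ (i : Fin N) (t : ℝ), t ∈ Set.Icc (0 : ℝ) H →
      IGT i t = if 0 ≤ fGT i t then 1 else 0)
    (hOGT : ∀ (i : Fin N) (t : ℝ), t ∈ Set.Icc (0 : ℝ) H →
      OGT i t = IGT i t * eT i t)
    (hOGT_int : ∀ i : Fin N, IntervalIntegrable (OGT i) MeasureTheory.volume 0 H)
    (hSGT : ∀ (i : Fin N) (t : ℝ), t ∈ Set.Icc (0 : ℝ) H →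
      SGT i t = SGT i 0 + ∫ s in (0:ℝ)..t, OGT i s)
    -- global control dynamics
    (hrGC : ∀ (i : Fin N) (t : ℝ), t ∈ Set.Icc (0 : ℝ) H →
      rGC i t = Ψ (SGC i t) (ehC i t))
    (hfGC : ∀ (i : Fin N) (t : ℝ), t ∈ Set.Icc (0 : ℝ) H →
      fGC i t = f i (fun j => rGC j t) (R t))
    (hIGC : ∀ (i : Fin N) (t : ℝ), t ∈ Set.Icc (0 : ℝ) H →
      IGC i t = if 0 ≤ fGC i t then 1 else 0)
    (hOGC : ∀ (i : Fin N) (t : ℝ), t ∈ Set.Icc (0 : ℝ) H →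
      OGC i t = IGC i t * eC i t)
    (hOGC_int : ∀ i : Fin N, IntervalIntegrable (OGC i) MeasureTheory.volume 0 H)
    (hSGC : ∀ (i : Fin N) (t : ℝ), t ∈ Set.Icc (0 : ℝ) H →
      SGC i t = SGC i 0 + ∫ s in (0:ℝ)..t, OGC i s) :
    ∀ (i : Fin N) (t : ℝ), t ∈ Set.Icc (0 : ℝ) H →
      ∫ s in (0:ℝ)..t, OE i s ≤ ∫ s in (0:ℝ)..t, OGT i s := by
  have hsub : ∀ t ∈ Set.Icc (0 : ℝ) H, Set.uIcc 0 t ⊆ Set.uIcc 0 H := by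
    intro t ht
    rw [Set.uIcc_of_le ht.1, Set.uIcc_of_le hH.le]
    exact Set.Icc_subset_Icc_right ht.2
  have hcE : ∀ i, ContinuousOn (SE i) (Set.Icc 0 H) := by
    intro i
    have h := intervalIntegral.continuousOn_primitive_interval' (hOE_int i) Set.left_mem_uIcc
    rw [Set.uIcc_of_le hH.le] at h
    exact (continuousOn_const.add h).congr (fun t ht => hSE i t ht)
  have hcG : ∀ i, ContinuousOn (SGT i) (Set.Icc 0 H) := by
    intro i
    have h := intervalIntegral.continuousOn_primitive_interval' (hOGT_int i) Set.left_mem_uIcc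
    rw [Set.uIcc_of_le hH.le] at h
    exact (continuousOn_const.add h).congr (fun t ht => hSGT i t ht)
  have hrE' : ∀ (i : Fin N) (t : ℝ), t ∈ Set.Icc (0 : ℝ) H → rE i t = Ψ (SE i t) (ehT i t) := by
    intro i t ht
    rw [hrE i t ht, heq i t ht, ite_self]
  have hcrE : ∀ i, ContinuousOn (rE i) (Set.Icc 0 H) := fun i =>
    (hcont_Ψ.comp_continuousOn ((hcE i).prodMk (hcont_e i).2.2.1)).congr (hrE' i)
  have hcrG : ∀ i, ContinuousOn (rGT i) (Set.Icc 0 H) := fun i =>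
    (hcont_Ψ.comp_continuousOn ((hcG i).prodMk (hcont_e i).2.2.1)).congr (hrGT i)
  have hcfE : ∀ i, ContinuousOn (fNE i) (Set.Icc 0 H) := fun i =>
    ((hcont_f i).comp_continuousOn
      ((continuousOn_pi.2 hcrE).prodMk hcont_R.continuousOn)).congr (hfNE i)
  have hcfG : ∀ i, ContinuousOn (fGT i) (Set.Icc 0 H) := fun i =>
    ((hcont_f i).comp_continuousOn
      ((continuousOn_pi.2 hcrG).prodMk hcont_R.continuousOn)).congr (hfGT i)
  have main : Set.Icc 0 H ⊆ {t | ∀ i, SE i t ≤ SGT i t} := by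
    apply IsClosed.Icc_subset_of_forall_mem_nhdsWithin
    · have h2 : {t | ∀ i, SE i t ≤ SGT i t} ∩ Set.Icc 0 H
          = {t | t ∈ Set.Icc 0 H ∧ (fun i => SE i t) ≤ (fun i => SGT i t)} := by
        ext t; simp only [Set.mem_inter_iff, Set.mem_setOf_eq, Pi.le_def]; tauto
      rw [h2]
      exact isClosed_Icc.isClosed_le (continuousOn_pi.2 hcE) (continuousOn_pi.2 hcG)
    · intro i
      exact (hS0 i).1.le
    · rintro x ⟨hx, hx0, hxH⟩
      have hZ : ∀ᶠ y in nhdsWithin x (Set.Ioi x), ∀ t ∈ Set.Ioo x y,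
          t ∉ {t : ℝ | t ∈ Set.Icc (0 : ℝ) H ∧
            ∃ i : Fin N, fNE i t = 0 ∨ fGT i t = 0 ∨ fGC i t = 0} := by
        have h1 := (hfin.subset (Set.diff_subset (t := {x}))).isClosed.isOpen_compl.mem_nhds
          (x := x) (by simp)
        obtain ⟨y, hy, hy'⟩ := mem_nhdsGT_iff_exists_Ioo_subset.1 (mem_nhdsWithin_of_mem_nhds h1)
        filter_upwards [Ioo_mem_nhdsGT hy] with z hz t ht hmem
        exact hy' ⟨ht.1, ht.2.trans hz.2⟩ ⟨hmem, ht.1.ne'⟩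
      obtain ⟨y, hyZ, hxy, hyH⟩ := (hZ.and (Ioo_mem_nhdsGT hxH)).exists
      have hIcc : Set.Ioo x y ⊆ Set.Icc 0 H := fun t ht =>
        ⟨hx0.trans ht.1.le, ht.2.le.trans hyH.le⟩
      filter_upwards [Ioo_mem_nhdsGT hxy] with u hu
      have huH := hIcc hu
      have hstep : ∀ i, (∀ t ∈ Set.Ioo x y, OE i t ≤ OGT i t) → SE i u ≤ SGT i u := by
        intro i hO
        have hxI : x ∈ Set.Icc 0 H := ⟨hx0, hxH.le⟩
        have hs : Set.uIcc x u ⊆ Set.uIcc 0 H := by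
          rw [Set.uIcc_of_le hu.1.le, Set.uIcc_of_le hH.le]
          exact Set.Icc_subset_Icc hx0 huH.2
        have iE := (hOE_int i).mono_set hs
        have iG := (hOGT_int i).mono_set hs
        have e1 := intervalIntegral.integral_add_adjacent_intervals
          ((hOE_int i).mono_set (hsub x hxI)) iE
        have e2 := intervalIntegral.integral_add_adjacent_intervals
          ((hOGT_int i).mono_set (hsub x hxI)) iG
        have h3 := intervalIntegral.integral_mono_on_of_le_Ioo hu.1.le iE iG
          (fun t ht => hO t ⟨ht.1, ht.2.trans hu.2⟩)
        have a1 := hSE i u huH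
        have a2 := hSE i x hxI
        have a3 := hSGT i u huH
        have a4 := hSGT i x hxI
        have a5 := hx i
        linarith
      have hA : ∀ i, SGT i u < SE i u → fGT i u < 0 ∧ 0 < fNE i u := by
        intro i hi
        by_contra hc
        refine absurd (hstep i ?_) (not_le.2 hi)
        have s1 := aux_sign (fNE i) x y ((hcfE i).mono hIcc)
          (fun t ht h => hyZ t ht ⟨hIcc ht, i, Or.inl h⟩)
        have s2 := aux_sign (fGT i) x y ((hcfG i).mono hIcc)
          (fun t ht h => hyZ t ht ⟨hIcc ht, i, Or.inr (Or.inl h)⟩)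
        intro t ht
        have htH := hIcc ht
        have n1 := he_nonneg i t htH
        have n2 := he_mono i t htH
        rw [hOE i t htH, hOGT i t htH, hIE i t htH, hIGT i t htH]
        rcases s2 with s2 | s2
        · rw [if_pos (s2 t ht).le]
          split_ifs <;> linarith
        · rcases s1 with s1 | s1
          · exact absurd ⟨s2 u hu, s1 u hu⟩ hc
          · rw [if_neg (not_le.2 (s1 t ht)), if_neg (not_le.2 (s2 t ht))]
            simp
      classical
      by_contra hne
      simp only [Set.mem_setOf_eq, not_forall, not_le] at hne
      obtain ⟨i, hi⟩ := hne
      have hle := aux_sum_le f hf_anti hf_sum_mono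
        (Finset.univ.filter fun i => SGT i u < SE i u) (fun j => rE j u) (fun j => rGT j u) (R u)
        (by
          intro j hj
          have hj' := (Finset.mem_filter.1 hj).2
          simp only [hrE' j u huH, hrGT j u huH]
          exact hΨ_anti _ _ _ hj'.le)
        (by
          intro j hj
          have hj' : SE j u ≤ SGT j u := by simpa using hj
          simp only [hrE' j u huH, hrGT j u huH]
          exact hΨ_anti _ _ _ hj')
      refine absurd hle (not_le.2 ?_)
      refine Finset.sum_lt_sum_of_nonempty ⟨i, by simpa using hi⟩ ?_
      intro j hj
      have := hA j (Finset.mem_filter.1 hj).2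
      rw [← hfNE j u huH, ← hfGT j u huH]
      exact this.1.trans this.2
  intro i t ht
  have h := main ht i
  have a1 := hSE i t ht
  have a3 := hSGT i t ht
  have a5 := (hS0 i).1
  linarith
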